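/- Assume γL² < 1 and set α := (1 − γL²)/(4L³). Let w ∈ W, let w* ∈ W be a fixed point of the projected expected update (w* is the metric projection of w* + α·ḡ(w*) onto W), and let p ∈ W be the metric projection of w + α·ḡ(w) onto W. Then ‖w* − p‖₂² ≤ ‖w* − w‖₂² − ((1 − γL²)/(2L²))²·Σ_s D(s)·⟨x(s), w* − w⟩². -/

import Mathlib

open scoped RealInnerProductSpace BigOperators
open Finset

/-- The per-sample TD update
`g(w; s, s') := (f(r(s,s') + γ⟨x(s'), w⟩) − f(⟨x(s), w⟩)) • x(s)`. -/
noncomputable def tdSample {S : Type*} {d : ℕ} (x : S → EuclideanSpace ℝ (Fin d))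
    (r : S → S → ℝ) (γ : ℝ) (f : ℝ → ℝ) (w : EuclideanSpace ℝ (Fin d)) (s s' : S) :
    EuclideanSpace ℝ (Fin d) :=
  (f (r s s' + γ * ⟪x s', w⟫) - f ⟪x s, w⟫) • x s

/-- The expected TD update `ḡ(w) := Σ_{s,s'} D(s) P(s,s') g(w; s, s')`. -/
noncomputable def tdExpected {S : Type*} [Fintype S] {d : ℕ} (D : S → ℝ) (P : S → S → ℝ)
    (x : S → EuclideanSpace ℝ (Fin d)) (r : S → S → ℝ) (γ : ℝ) (f : ℝ → ℝ)
    (w : EuclideanSpace ℝ (Fin d)) : EuclideanSpace ℝ (Fin d) :=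
  ∑ s, ∑ s', (D s * P s s') • tdSample x r γ f w s s'

/-- Variational inequality satisfied by a metric projection onto a convex set. -/
lemma inner_sub_nonpos_of_norm_sub_le {E : Type*} [NormedAddCommGroup E] [InnerProductSpace ℝ E]
    {W : Set E} (hW : Convex ℝ W) {v p : E} (hp : p ∈ W) (h : ∀ u ∈ W, ‖v - p‖ ≤ ‖v - u‖)
    {u : E} (hu : u ∈ W) : ⟪v - p, u - p⟫ ≤ 0 := by
  have : Nonempty W := ⟨⟨p, hp⟩⟩
  refine (norm_eq_iInf_iff_real_inner_le_zero hW hp).1 (le_antisymm ?_ ?_) u hu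
  · exact le_ciInf fun q => h q q.2
  · exact ciInf_le (f := fun q : W => ‖v - q‖)
      ⟨0, by rintro _ ⟨q, rfl⟩; exact norm_nonneg _⟩ ⟨p, hp⟩

/-- Metric projections onto a convex set are nonexpansive. -/
lemma norm_proj_sub_proj_le {E : Type*} [NormedAddCommGroup E] [InnerProductSpace ℝ E]
    {W : Set E} (hW : Convex ℝ W) {v v' p p' : E} (hp : p ∈ W) (hp' : p' ∈ W)
    (h : ∀ u ∈ W, ‖v - p‖ ≤ ‖v - u‖) (h' : ∀ u ∈ W, ‖v' - p'‖ ≤ ‖v' - u‖) :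
    ‖p - p'‖ ≤ ‖v - v'‖ := by
  have h1 := inner_sub_nonpos_of_norm_sub_le hW hp h hp'
  have h2 := inner_sub_nonpos_of_norm_sub_le hW hp' h' hp
  have h3 : ⟪p - p', p - p'⟫ ≤ ⟪v - v', p - p'⟫ := by
    simp only [inner_sub_left, inner_sub_right] at *
    linarith
  rw [real_inner_self_eq_norm_mul_norm] at h3
  have h4 := h3.trans (real_inner_le_norm _ _)
  rcases (norm_nonneg (p - p')).eq_or_lt with h0 | h0
  · rw [← h0]; exact norm_nonneg _
  · exact le_of_mul_le_mul_right h4 h0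

section Marginals

variable {S : Type*} [Fintype S] {D : S → ℝ} {P : S → S → ℝ}

lemma sum_joint_mul_fst (hP1 : ∀ s, ∑ s', P s s' = 1) (h : S → ℝ) :
    ∑ s, ∑ s', D s * P s s' * h s = ∑ s, D s * h s := by
  refine Finset.sum_congr rfl fun s _ => ?_
  rw [← Finset.sum_mul, ← Finset.mul_sum, hP1, mul_one]

lemma sum_joint_mul_snd (hstat : ∀ s', ∑ s, D s * P s s' = D s') (h : S → ℝ) :
    ∑ s, ∑ s', D s * P s s' * h s' = ∑ s, D s * h s := by
  rw [Finset.sum_comm]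
  refine Finset.sum_congr rfl fun s _ => ?_
  rw [← Finset.sum_mul, hstat]

end Marginals

section Increments

variable {f : ℝ → ℝ} {L : ℝ}

lemma sq_div_le_mul_sub (hf : Monotone f)
    (hLip : ∀ a b : ℝ, (1 / L) * |a - b| ≤ |f a - f b|) (a b : ℝ) :
    (a - b) ^ 2 / L ≤ (a - b) * (f a - f b) := by
  have hnn : 0 ≤ (a - b) * (f a - f b) := by
    rcases le_total a b with h | h
    · exact mul_nonneg_of_nonpos_of_nonpos (sub_nonpos.2 h) (sub_nonpos.2 (hf h))
    · exact mul_nonneg (sub_nonneg.2 h) (sub_nonneg.2 (hf h))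
  calc (a - b) ^ 2 / L = |a - b| * ((1 / L) * |a - b|) := by
        rw [← sq_abs]; ring
    _ ≤ |a - b| * |f a - f b| := by gcongr; exact hLip a b
    _ = (a - b) * (f a - f b) := by rw [← abs_mul, abs_of_nonneg hnn]

lemma abs_sub_affine_le {γ : ℝ} (hγ : 0 ≤ γ)
    (hLip : ∀ a b : ℝ, |f a - f b| ≤ L * |a - b|) (c a b : ℝ) :
    |f (c + γ * a) - f (c + γ * b)| ≤ γ * L * |a - b| := by
  have h := hLip (c + γ * a) (c + γ * b)
  rwa [show c + γ * a - (c + γ * b) = γ * (a - b) by ring, abs_mul, abs_of_nonneg hγ,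
    show L * (γ * |a - b|) = γ * L * |a - b| by ring] at h

end Increments

section ExpectedUpdate

variable {S : Type*} [Fintype S] {d : ℕ} {D : S → ℝ} {P : S → S → ℝ}
  {x : S → EuclideanSpace ℝ (Fin d)} {r : S → S → ℝ} {γ L : ℝ} {f : ℝ → ℝ}

lemma tdExpected_sub (w v : EuclideanSpace ℝ (Fin d)) :
    tdExpected D P x r γ f w - tdExpected D P x r γ f v =
      ∑ s, ∑ s', (D s * P s s') • ((f ⟪x s, v⟫ - f ⟪x s, w⟫) -
        (f (r s s' + γ * ⟪x s', v⟫) - f (r s s' + γ * ⟪x s', w⟫))) • x s := by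
  simp only [tdExpected, tdSample, ← Finset.sum_sub_distrib, ← smul_sub, ← sub_smul]
  refine Finset.sum_congr rfl fun s _ => Finset.sum_congr rfl fun s' _ => ?_
  congr 2
  ring

/-- Strong monotonicity of the expected update in the `D`-weighted seminorm. -/
lemma inner_tdExpected_sub_ge
    (hD : ∀ s, 0 ≤ D s) (hP : ∀ s s', 0 ≤ P s s') (hP1 : ∀ s, ∑ s', P s s' = 1)
    (hstat : ∀ s', ∑ s, D s * P s s' = D s') (hγ : 0 ≤ γ) (hL : 0 ≤ L) (hf : Monotone f)
    (hlower : ∀ a b : ℝ, (1 / L) * |a - b| ≤ |f a - f b|)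
    (hupper : ∀ a b : ℝ, |f a - f b| ≤ L * |a - b|) (w v : EuclideanSpace ℝ (Fin d)) :
    (1 / L - γ * L) * ∑ s, D s * ⟪x s, v - w⟫ ^ 2 ≤
      ⟪v - w, tdExpected D P x r γ f w - tdExpected D P x r γ f v⟫ := by
  have hsplit : (1 / L - γ * L) * ∑ s, D s * ⟪x s, v - w⟫ ^ 2 =
      ∑ s, ∑ s', D s * P s s' * (⟪x s, v - w⟫ ^ 2 / L -
        γ * L * ((⟪x s, v - w⟫ ^ 2 + ⟪x s', v - w⟫ ^ 2) / 2)) := by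
    have h1 := sum_joint_mul_fst (D := D) hP1 fun s => ⟪x s, v - w⟫ ^ 2
    have h2 := sum_joint_mul_snd hstat fun s => ⟪x s, v - w⟫ ^ 2
    have h3 : ∀ s s', D s * P s s' * (⟪x s, v - w⟫ ^ 2 / L -
        γ * L * ((⟪x s, v - w⟫ ^ 2 + ⟪x s', v - w⟫ ^ 2) / 2)) =
        (1 / L - γ * L / 2) * (D s * P s s' * ⟪x s, v - w⟫ ^ 2) -
          γ * L / 2 * (D s * P s s' * ⟪x s', v - w⟫ ^ 2) := fun s s' => by ring
    simp only [h3, Finset.sum_sub_distrib, ← Finset.mul_sum, h1, h2]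
    ring
  rw [hsplit, tdExpected_sub]
  simp only [inner_sum, real_inner_smul_right]
  refine Finset.sum_le_sum fun s _ => Finset.sum_le_sum fun s' _ =>
    mul_le_mul_of_nonneg_left ?_ (mul_nonneg (hD s) (hP s s'))
  have hu := sq_div_le_mul_sub hf hlower ⟪x s, v⟫ ⟪x s, w⟫
  have hv := abs_sub_affine_le hγ hupper (r s s') ⟪x s', v⟫ ⟪x s', w⟫
  rw [real_inner_comm (x s) (v - w)]
  simp only [← inner_sub_right] at hu hv
  set z := ⟪x s, v - w⟫
  set z' := ⟪x s', v - w⟫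
  set t := f (r s s' + γ * ⟪x s', v⟫) - f (r s s' + γ * ⟪x s', w⟫)
  have hcross : t * z ≤ γ * L * ((z ^ 2 + z' ^ 2) / 2) :=
    calc t * z ≤ |t| * |z| := by rw [← abs_mul]; exact le_abs_self _
      _ ≤ γ * L * |z'| * |z| := by gcongr
      _ = γ * L * (|z'| * |z|) := by ring
      _ ≤ γ * L * ((z ^ 2 + z' ^ 2) / 2) := by
        gcongr
        rw [← sq_abs z, ← sq_abs z']
        linarith [two_mul_le_add_sq |z'| |z|]
  linarith

/-- Lipschitz bound for the expected update in the `D`-weighted seminorm. -/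
lemma norm_tdExpected_sub_sq_le
    (hD : ∀ s, 0 ≤ D s) (hD1 : ∑ s, D s = 1)
    (hP : ∀ s s', 0 ≤ P s s') (hP1 : ∀ s, ∑ s', P s s' = 1)
    (hstat : ∀ s', ∑ s, D s * P s s' = D s') (hx : ∀ s, ‖x s‖ ≤ 1) (hγ : 0 ≤ γ)
    (hupper : ∀ a b : ℝ, |f a - f b| ≤ L * |a - b|) (w v : EuclideanSpace ℝ (Fin d)) :
    ‖tdExpected D P x r γ f w - tdExpected D P x r γ f v‖ ^ 2 ≤
      ((1 + γ) * L) ^ 2 * ∑ s, D s * ⟪x s, v - w⟫ ^ 2 := by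
  have hnorm : ‖tdExpected D P x r γ f w - tdExpected D P x r γ f v‖ ≤
      (1 + γ) * L * ∑ s, D s * |⟪x s, v - w⟫| := by
    have hsplit : (1 + γ) * L * ∑ s, D s * |⟪x s, v - w⟫| =
        ∑ s, ∑ s', D s * P s s' * (L * |⟪x s, v - w⟫| + γ * L * |⟪x s', v - w⟫|) := by
      have h1 := sum_joint_mul_fst (D := D) hP1 fun s => |⟪x s, v - w⟫|
      have h2 := sum_joint_mul_snd hstat fun s => |⟪x s, v - w⟫|
      have h3 : ∀ s s', D s * P s s' * (L * |⟪x s, v - w⟫| + γ * L * |⟪x s', v - w⟫|) =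
          L * (D s * P s s' * |⟪x s, v - w⟫|) +
            γ * L * (D s * P s s' * |⟪x s', v - w⟫|) := fun s s' => by ring
      simp only [h3, Finset.sum_add_distrib, ← Finset.mul_sum, h1, h2]
      ring
    rw [hsplit, tdExpected_sub]
    refine norm_sum_le_of_le _ fun s _ => norm_sum_le_of_le _ fun s' _ => ?_
    have hm := mul_nonneg (hD s) (hP s s')
    rw [norm_smul, Real.norm_of_nonneg hm, norm_smul, Real.norm_eq_abs]
    refine mul_le_mul_of_nonneg_left ?_ hm
    refine (mul_le_of_le_one_right (abs_nonneg _) (hx s)).trans ((abs_sub _ _).trans ?_)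
    have hu := hupper ⟪x s, v⟫ ⟪x s, w⟫
    have hv := abs_sub_affine_le hγ hupper (r s s') ⟪x s', v⟫ ⟪x s', w⟫
    rw [← inner_sub_right] at hu hv
    exact add_le_add hu hv
  have hjensen : (∑ s, D s * |⟪x s, v - w⟫|) ^ 2 ≤ ∑ s, D s * ⟪x s, v - w⟫ ^ 2 := by
    simpa only [sq_abs] using Real.pow_arith_mean_le_arith_mean_pow_of_even Finset.univ D
      (fun s => |⟪x s, v - w⟫|) (fun s _ => hD s) hD1 even_two
  calc _ ≤ ((1 + γ) * L * ∑ s, D s * |⟪x s, v - w⟫|) ^ 2 := by gcongr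
    _ = ((1 + γ) * L) ^ 2 * (∑ s, D s * |⟪x s, v - w⟫|) ^ 2 := by ring
    _ ≤ _ := by gcongr

end ExpectedUpdate

/-- one-step progress bound of the projected expected TD update toward
its fixed point `w*`:
`‖w* − p‖² ≤ ‖w* − w‖² − ((1 − γL²)/(2L²))² Σ_s D(s)⟨x(s), w* − w⟩²`. -/
theorem td_projected_update_progress {S : Type*} [Fintype S] [Nonempty S] {d : ℕ}
    (D : S → ℝ) (P : S → S → ℝ) (x : S → EuclideanSpace ℝ (Fin d))
    (r : S → S → ℝ) (γ L : ℝ) (f : ℝ → ℝ)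
    (hD : ∀ s, 0 ≤ D s) (hD1 : ∑ s, D s = 1)
    (hP : ∀ s s', 0 ≤ P s s') (hP1 : ∀ s, ∑ s', P s s' = 1)
    (hstat : ∀ s', ∑ s, D s * P s s' = D s')
    (hx : ∀ s, ‖x s‖ ≤ 1)
    (hγ0 : 0 ≤ γ) (hγ1 : γ < 1) (hL : 1 ≤ L)
    (hf : StrictMono f)
    (hfLip : ∀ a b : ℝ, (1 / L) * |a - b| ≤ |f a - f b| ∧ |f a - f b| ≤ L * |a - b|)
    (W : Set (EuclideanSpace ℝ (Fin d)))
    (hWne : W.Nonempty) (hWcpt : IsCompact W) (hWcvx : Convex ℝ W)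
    (hγL : γ * L ^ 2 < 1)
    (w wstar p : EuclideanSpace ℝ (Fin d))
    (hw : w ∈ W) (hwstar : wstar ∈ W) (hp : p ∈ W)
    (hfix : ∀ u ∈ W,
      ‖wstar + ((1 - γ * L ^ 2) / (4 * L ^ 3)) • tdExpected D P x r γ f wstar - wstar‖ ≤
        ‖wstar + ((1 - γ * L ^ 2) / (4 * L ^ 3)) • tdExpected D P x r γ f wstar - u‖)
    (hproj : ∀ u ∈ W,
      ‖w + ((1 - γ * L ^ 2) / (4 * L ^ 3)) • tdExpected D P x r γ f w - p‖ ≤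
        ‖w + ((1 - γ * L ^ 2) / (4 * L ^ 3)) • tdExpected D P x r γ f w - u‖) :
    ‖wstar - p‖ ^ 2 ≤ ‖wstar - w‖ ^ 2 -
      ((1 - γ * L ^ 2) / (2 * L ^ 2)) ^ 2 * ∑ s, D s * ⟪x s, wstar - w⟫ ^ 2 := by
  have hL0 : 0 < L := by linarith
  have hne := norm_proj_sub_proj_le hWcvx hwstar hp hfix hproj
  have hmono := inner_tdExpected_sub_ge (x := x) (r := r) hD hP hP1 hstat hγ0 hL0.le hf.monotone
    (fun a b => (hfLip a b).1) (fun a b => (hfLip a b).2) w wstar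
  have hnorm := norm_tdExpected_sub_sq_le (r := r) hD hD1 hP hP1 hstat hx hγ0
    (fun a b => (hfLip a b).2) w wstar
  set α := (1 - γ * L ^ 2) / (4 * L ^ 3) with hα
  set Q := ∑ s, D s * ⟪x s, wstar - w⟫ ^ 2
  have hQ : 0 ≤ Q := Finset.sum_nonneg fun s _ => mul_nonneg (hD s) (sq_nonneg _)
  have hα0 : 0 ≤ α := div_nonneg (by linarith) (by positivity)
  set G := tdExpected D P x r γ f w - tdExpected D P x r γ f wstar with hG
  have hdiff : wstar + α • tdExpected D P x r γ f wstar - (w + α • tdExpected D P x r γ f w) =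
      (wstar - w) - α • G := by
    rw [hG, smul_sub]; abel
  have hnorm' : ‖G‖ ^ 2 ≤ (2 * L) ^ 2 * Q := hnorm.trans (by gcongr; linarith)
  calc ‖wstar - p‖ ^ 2 ≤ ‖(wstar - w) - α • G‖ ^ 2 := by rw [← hdiff]; gcongr
    _ = ‖wstar - w‖ ^ 2 - 2 * α * ⟪wstar - w, G⟫ + α ^ 2 * ‖G‖ ^ 2 := by
      rw [norm_sub_sq_real, real_inner_smul_right, norm_smul, mul_pow, Real.norm_eq_abs, sq_abs]
      ring
    _ ≤ ‖wstar - w‖ ^ 2 - 2 * α * ((1 / L - γ * L) * Q) + α ^ 2 * ((2 * L) ^ 2 * Q) := by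
      gcongr
    _ = _ := by
      rw [hα]
      field_simp
      ring
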